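/- Assume the number-field distortion setup and fix 1 ≤ j ≤ J. If δ_i = 0 for all 1 ≤ i ≤ j−1, then M_j^{(1)} ≤ s · Σ_I 1/N(I), where the sum is over all distinguishable ideals I of O_K with N(I) ≥ N(I_1) and P_min(I) = p_j. -/

import Mathlib

/-!
If `δ_i = 0` for all `i < j`, the distortion does nothing before step `j`, so `P_{j-1}` is uniform.
Averaging the relative density of `𝓑_j` in the fibres of `π_{j-1}` over the uniform measure gives
the density of `𝓑_j`, whatever the map `π_{j-1}` is. Since `a_i + I_i` has density `1 / N(I_i)`, a
union bound estimates this by the sum of `1 / N(I_i)` over the `i` with `P_min(I_i) = p_j`, in which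
every ideal is repeated at most `s` times.

The sum over all such ideals converges: they are composed of the finitely many primes of norm at
most `N(p_j)`, so it is dominated by a finite Euler product.
-/

set_option maxHeartbeats 1000000
set_option synthInstance.maxHeartbeats 1000000

open scoped Classical
open NumberField

/-- `p` is the unique prime ideal factor of `I` of largest norm. -/
def IsPmin {K : Type*} [Field K] [NumberField K] (I p : Ideal (𝓞 K)) : Prop :=
  p.IsPrime ∧ p ∣ I ∧ ∀ q : Ideal (𝓞 K), q.IsPrime → q ∣ I → q ≠ p →
    Ideal.absNorm q < Ideal.absNorm p

/-- A nonzero proper ideal is distinguishable if it has a unique prime factor of largest norm. -/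
def Distinguishable {K : Type*} [Field K] [NumberField K] (I : Ideal (𝓞 K)) : Prop :=
  I ≠ ⊥ ∧ I ≠ ⊤ ∧ ∃ p : Ideal (𝓞 K), IsPmin I p

open Finset

section Distortion

variable {X : Type*}

/-- The distortion step `P_{j-1} ↦ P_j` with threshold `δ`, where `α x` is the density of the bad
set `B` in the fibre through `x`. The case `α x = 0` is separate because its quotient would be
`0 / 0`. -/
noncomputable def distort (δ : ℝ) (B : Finset X) (α P : X → ℝ) (x : X) : ℝ :=
  if α x < δ then (if x ∈ B then 0 else P x / (1 - α x))
  else if α x = 0 then P x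
  else P x * (α x - (if x ∈ B then δ else 0)) / (α x * (1 - δ))

lemma distort_zero (B : Finset X) {α : X → ℝ} (hα : ∀ x, 0 ≤ α x) (P : X → ℝ) :
    distort 0 B α P = P := by
  funext x
  rw [distort, if_neg (hα x).not_gt]
  split_ifs with h
  · rfl
  all_goals rw [sub_zero, sub_zero, mul_one, mul_div_cancel_right₀ _ h]

lemma eq_initial_of_forall_eq_distort_zero {B : ℕ → Finset X} {α P : ℕ → X → ℝ} {k : ℕ}
    (hα : ∀ i ∈ Icc 1 k, ∀ x, 0 ≤ α i x)
    (hP : ∀ i ∈ Icc 1 k, P i = distort 0 (B i) (α i) (P (i - 1))) : P k = P 0 := by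
  induction k with
  | zero => rfl
  | succ k ih =>
    have hk : k + 1 ∈ Icc 1 (k + 1) := right_mem_Icc.mpr k.succ_pos
    have hsub : Icc 1 k ⊆ Icc 1 (k + 1) := Icc_subset_Icc_right k.le_succ
    rw [hP _ hk, distort_zero _ (hα _ hk), Nat.add_sub_cancel]
    exact ih (fun i hi => hα i (hsub hi)) fun i hi => hP i (hsub hi)

end Distortion

section FiberDensity

variable {X Y : Type*} [Fintype X]

/-- The density of `B` in the fibre of `π` through `x`, which is `α_j(x)` for `B = 𝓑_j` and
`π = π_{j-1}`. -/
noncomputable def fiberDensity (π : X → Y) (B : Finset X) (x : X) : ℝ :=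
  (#(({x' | π x' = π x} : Finset X) ∩ B) : ℝ) / #{x' | π x' = π x}

lemma fiberDensity_nonneg (π : X → Y) (B : Finset X) (x : X) : 0 ≤ fiberDensity π B x := by
  unfold fiberDensity
  positivity

lemma sum_inv_card_fiber (π : X → Y) (b : X) :
    ∑ x with π x = π b, (#{x' | π x' = π x} : ℝ)⁻¹ = 1 := by
  have hb : b ∈ ({x | π x = π b} : Finset X) := (mem_filter_univ b).mpr rfl
  have hne : (#{x | π x = π b} : ℝ) ≠ 0 := Nat.cast_ne_zero.mpr (card_ne_zero_of_mem hb)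
  calc ∑ x with π x = π b, (#{x' | π x' = π x} : ℝ)⁻¹
      = ∑ x with π x = π b, (#{x' | π x' = π b} : ℝ)⁻¹ :=
        sum_congr rfl fun x hx => by rw [(mem_filter_univ x).mp hx]
    _ = 1 := by rw [sum_const, nsmul_eq_mul, mul_inv_cancel₀ hne]

lemma sum_fiberDensity (π : X → Y) (B : Finset X) : ∑ x, fiberDensity π B x = #B := by
  have hexpand (x : X) :
      fiberDensity π B x = ∑ b ∈ B, if π x = π b then (#{x' | π x' = π x} : ℝ)⁻¹ else 0 := by
    rw [fiberDensity, div_eq_mul_inv, filter_inter, univ_inter, ← nsmul_eq_mul, ← sum_const,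
      sum_filter]
    simp only [eq_comm]
  simp only [hexpand]
  rw [sum_comm]
  simp only [← sum_filter, sum_inv_card_fiber, sum_const, nsmul_eq_mul, mul_one]

end FiberDensity

section Density

lemma card_filter_sub_mem {G : Type*} [AddGroup G] [Fintype G] (H : AddSubgroup G) (c : G) :
    #{x | x - c ∈ H} = Nat.card H := by
  rw [← Fintype.card_subtype, ← Nat.card_eq_fintype_card]
  exact Nat.card_congr ((Equiv.subRight c).subtypeEquiv fun _ => Iff.rfl)

lemma card_residueClass_div_card {R : Type*} [CommRing R] {Q I : Ideal R} (hQI : Q ≤ I)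
    [Fintype (R ⧸ Q)] (c : R ⧸ Q) :
    (#{x | x - c ∈ I.map (Ideal.Quotient.mk Q)} : ℝ) / Fintype.card (R ⧸ Q) =
      1 / Nat.card (R ⧸ I) := by
  have hclass : #{x | x - c ∈ I.map (Ideal.Quotient.mk Q)} =
      Nat.card (I.map (Ideal.Quotient.mk Q)) :=
    card_filter_sub_mem (I.map (Ideal.Quotient.mk Q)).toAddSubgroup c
  have hindex : Nat.card ((R ⧸ Q) ⧸ I.map (Ideal.Quotient.mk Q)) = Nat.card (R ⧸ I) :=
    Nat.card_congr (DoubleQuot.quotQuotEquivQuotOfLE hQI).toEquiv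
  have hpos : (Nat.card (I.map (Ideal.Quotient.mk Q)) : ℝ) ≠ 0 := by
    exact_mod_cast Nat.card_pos.ne'
  rw [hclass, ← Nat.card_eq_fintype_card,
    Submodule.card_eq_card_quotient_mul_card (I.map (Ideal.Quotient.mk Q)), hindex, Nat.cast_mul,
    div_mul_cancel_left₀ hpos, one_div]

variable {K : Type*} [Field K] [NumberField K] {ι : Type*}

/-- The set `𝓑_j` of the paper for `p = p_j`: the union, read modulo `Q`, of the classes
`a i + I i` with `P_min(I i) = p`. -/
noncomputable def badSet (a : ι → 𝓞 K) (I : ι → Ideal (𝓞 K)) (Q : Ideal (𝓞 K)) [Fintype (𝓞 K ⧸ Q)]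
    (p : Ideal (𝓞 K)) : Finset (𝓞 K ⧸ Q) :=
  {x | ∃ i, IsPmin (I i) p ∧ x - Ideal.Quotient.mk Q (a i) ∈ (I i).map (Ideal.Quotient.mk Q)}

lemma card_badSet_div_card_le [Fintype ι] (a : ι → 𝓞 K) {I : ι → Ideal (𝓞 K)} {Q : Ideal (𝓞 K)}
    (hQ : ∀ i, Q ≤ I i) [Fintype (𝓞 K ⧸ Q)] (p : Ideal (𝓞 K)) :
    (#(badSet a I Q p) : ℝ) / Fintype.card (𝓞 K ⧸ Q) ≤
      ∑ i with IsPmin (I i) p, 1 / (Ideal.absNorm (I i) : ℝ) := by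
  let C (i : ι) : Finset (𝓞 K ⧸ Q) :=
    {x | x - Ideal.Quotient.mk Q (a i) ∈ (I i).map (Ideal.Quotient.mk Q)}
  have hunion : badSet a I Q p = ({i | IsPmin (I i) p} : Finset ι).biUnion C := by
    ext x
    simp only [badSet, C, mem_biUnion, mem_filter_univ]
  calc (#(badSet a I Q p) : ℝ) / Fintype.card (𝓞 K ⧸ Q)
      ≤ (∑ i with IsPmin (I i) p, (#(C i) : ℝ)) / Fintype.card (𝓞 K ⧸ Q) := by
        rw [hunion]
        gcongr
        exact_mod_cast card_biUnion_le
    _ = ∑ i with IsPmin (I i) p, 1 / (Ideal.absNorm (I i) : ℝ) := by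
        rw [sum_div]
        exact sum_congr rfl fun i _ => card_residueClass_div_card (hQ i) _

end Density

section Convergence

lemma summable_pi_prod {ι : Type*} [Fintype ι] {κ : ι → Type*} {f : ∀ i, κ i → ℝ}
    (hf0 : ∀ i k, 0 ≤ f i k) (hf : ∀ i, Summable (f i)) :
    Summable fun g : ∀ i, κ i => ∏ i, f i (g i) := by
  refine summable_of_sum_le (c := ∏ i, ∑' k, f i k)
    (fun g => prod_nonneg fun i _ => hf0 i (g i)) fun T => ?_
  have hT : T ⊆ Fintype.piFinset fun i => T.image (· i) := fun g hg =>
    Fintype.mem_piFinset.mpr fun i => mem_image_of_mem (· i) hg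
  calc ∑ g ∈ T, ∏ i, f i (g i)
      ≤ ∑ g ∈ Fintype.piFinset fun i => T.image (· i), ∏ i, f i (g i) :=
        sum_le_sum_of_subset_of_nonneg hT fun g _ _ => prod_nonneg fun i _ => hf0 i (g i)
    _ = ∏ i, ∑ k ∈ T.image (· i), f i k := (prod_univ_sum _ _).symm
    _ ≤ ∏ i, ∑' k, f i k :=
        prod_le_prod (fun i _ => sum_nonneg fun k _ => hf0 i k) fun i _ =>
          (hf i).sum_le_tsum _ fun k _ => hf0 i k

section UniqueFactorization

open UniqueFactorizationMonoid

variable {M : Type*} [CommMonoidWithZero M] [UniqueFactorizationMonoid M] [NormalizationMonoid M]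
  [Subsingleton Mˣ]

lemma prod_pow_count_normalizedFactors {S : Finset M} {x : M} (hx : x ≠ 0)
    (hxS : ∀ q, Prime q → q ∣ x → q ∈ S) :
    ∏ q : S, (q : M) ^ (normalizedFactors x).count (q : M) = x := by
  have hsub : (normalizedFactors x).toFinset ⊆ S := fun q hq =>
    have hq := Multiset.mem_toFinset.mp hq
    hxS q (prime_of_normalized_factor q hq) (dvd_of_mem_normalizedFactors hq)
  rw [prod_coe_sort S fun q => q ^ (normalizedFactors x).count q,
    ← prod_multiset_count_of_subset _ _ hsub]
  exact associated_iff_eq.mp (prod_normalizedFactors hx)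

lemma summable_of_primeFactors_subset {f : M →* ℝ} (hf0 : ∀ x, 0 ≤ f x) {S : Finset M}
    (hf1 : ∀ q ∈ S, f q < 1) {T : Set M} (hT0 : 0 ∉ T)
    (hTS : ∀ x ∈ T, ∀ q, Prime q → q ∣ x → q ∈ S) : Summable fun x : T => f x := by
  have hEuler : Summable fun g : S → ℕ => ∏ q : S, f q ^ g q :=
    summable_pi_prod (fun q k => pow_nonneg (hf0 q) k) fun q =>
      summable_geometric_of_lt_one (hf0 q) (hf1 q q.2)
  let e (x : T) (q : S) : ℕ := (normalizedFactors (x : M)).count (q : M)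
  have he (x : T) : ∏ q : S, (q : M) ^ e x q = x :=
    prod_pow_count_normalizedFactors (ne_of_mem_of_not_mem x.2 hT0) (hTS x x.2)
  have hinj : Function.Injective e := fun x y hxy => Subtype.ext <| by rw [← he x, ← he y, hxy]
  refine (hEuler.comp_injective hinj).congr fun x => ?_
  rw [Function.comp_apply, ← congrArg f (he x), map_prod]
  simp only [map_pow]

end UniqueFactorization

section Dedekind

variable {R : Type*} [CommRing R] [IsDedekindDomain R] [Module.Free ℤ R] [Module.Finite ℤ R]

lemma one_lt_absNorm_of_prime {q : Ideal R} (hq : Prime q) : 1 < Ideal.absNorm q := by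
  have h0 : Ideal.absNorm q ≠ 0 := Ideal.absNorm_eq_zero_iff.not.mpr hq.ne_zero
  have h1 : Ideal.absNorm q ≠ 1 :=
    Ideal.absNorm_eq_one_iff.not.mpr (Ideal.isPrime_of_prime hq).ne_top
  omega

lemma summable_inv_absNorm_of_primeFactors_le [CharZero R] {T : Set (Ideal R)} (hT0 : 0 ∉ T)
    {N : ℕ} (hTN : ∀ I ∈ T, ∀ q, Prime q → q ∣ I → Ideal.absNorm q ≤ N) :
    Summable fun I : T => (Ideal.absNorm (I : Ideal R) : ℝ)⁻¹ := by
  let S : Finset (Ideal R) := {q ∈ (Ideal.finite_setOfPred_absNorm_le N).toFinset | Prime q}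
  let f : Ideal R →* ℝ :=
    { toFun I := (Ideal.absNorm I : ℝ)⁻¹
      map_one' := by simp
      map_mul' I J := by simp [mul_comm] }
  have hf0 (I) : 0 ≤ f I := inv_nonneg.mpr (Nat.cast_nonneg _)
  have hf1 : ∀ q ∈ S, f q < 1 := fun q hq =>
    inv_lt_one_of_one_lt₀ (by exact_mod_cast one_lt_absNorm_of_prime (mem_filter.mp hq).2)
  exact summable_of_primeFactors_subset hf0 hf1 hT0 fun I hI q hq hqI =>
    mem_filter.mpr ⟨(Set.Finite.mem_toFinset _).mpr (hTN I hI q hq hqI), hq⟩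

end Dedekind

variable {K : Type*} [Field K] [NumberField K]

lemma IsPmin.absNorm_le {I p q : Ideal (𝓞 K)} (h : IsPmin I p) (hq : q.IsPrime) (hqI : q ∣ I) :
    Ideal.absNorm q ≤ Ideal.absNorm p := by
  rcases eq_or_ne q p with rfl | hqp
  · exact le_rfl
  · exact (h.2.2 q hq hqI hqp).le

lemma summable_inv_absNorm_of_isPmin (p : Ideal (𝓞 K)) (N : ℕ) :
    Summable fun I : Ideal (𝓞 K) =>
      if Distinguishable I ∧ N ≤ Ideal.absNorm I ∧ IsPmin I p
      then 1 / (Ideal.absNorm I : ℝ) else 0 := by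
  let T : Set (Ideal (𝓞 K)) := {I | Distinguishable I ∧ N ≤ Ideal.absNorm I ∧ IsPmin I p}
  have hT : Summable fun I : T => (Ideal.absNorm (I : Ideal (𝓞 K)) : ℝ)⁻¹ :=
    summable_inv_absNorm_of_primeFactors_le (fun h => h.1.1 rfl) fun I hI q hq hqI =>
      hI.2.2.absNorm_le (Ideal.isPrime_of_prime hq) hqI
  refine (summable_subtype_iff_indicator (f := fun I => (Ideal.absNorm I : ℝ)⁻¹).mp hT).congr
    fun I => ?_
  simp only [T, Set.indicator_apply, Set.mem_ofPred_eq, one_div]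

end Convergence

lemma sum_comp_le_mul_tsum {ι β : Type*} {A : Finset ι} {I : ι → β} {g : β → ℝ}
    (hg0 : ∀ b, 0 ≤ g b) (hg : Summable g) {s : ℕ} (hs : ∀ b, #{i ∈ A | I i = b} ≤ s) :
    ∑ i ∈ A, g (I i) ≤ s * ∑' b, g b :=
  calc ∑ i ∈ A, g (I i) = ∑ b ∈ A.image I, #{i ∈ A | I i = b} • g b := sum_comp g I
    _ ≤ ∑ b ∈ A.image I, s • g b :=
        sum_le_sum fun b _ => nsmul_le_nsmul_left (hg0 b) (hs b)
    _ = s * ∑ b ∈ A.image I, g b := by rw [← smul_sum, nsmul_eq_mul]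
    _ ≤ s * ∑' b, g b := by
        gcongr
        exact hg.sum_le_tsum _ fun b _ => hg0 b

theorem first_moment_bound_general {K : Type*} [Field K] [NumberField K] {ι : Type*} [Fintype ι]
    (a : ι → 𝓞 K) {I : ι → Ideal (𝓞 K)} (hI : ∀ i, Distinguishable (I i))
    {N : ℕ} (hN : ∀ i, N ≤ Ideal.absNorm (I i)) {s : ℕ} (hs : ∀ I₀, #{i | I i = I₀} ≤ s)
    {Q : Ideal (𝓞 K)} (hQ : ∀ i, Q ≤ I i) [Fintype (𝓞 K ⧸ Q)]
    {J : ℕ} (p : ℕ → Ideal (𝓞 K)) {Y : ℕ → Type*} (π : ∀ i, 𝓞 K ⧸ Q → Y i)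
    {B : ℕ → Finset (𝓞 K ⧸ Q)} (hB : ∀ i ∈ Icc 1 J, B i = badSet a I Q (p i))
    {α : ℕ → 𝓞 K ⧸ Q → ℝ} (hα : ∀ i ∈ Icc 1 J, α i = fiberDensity (π (i - 1)) (B i))
    {δ : ℕ → ℝ} {P : ℕ → 𝓞 K ⧸ Q → ℝ} (hP0 : ∀ x, P 0 x = 1 / (Fintype.card (𝓞 K ⧸ Q) : ℝ))
    (hP : ∀ i ∈ Icc 1 J, P i = distort (δ i) (B i) (α i) (P (i - 1)))
    {j : ℕ} (hj : j ∈ Icc 1 J) (hδ : ∀ i ∈ Icc 1 (j - 1), δ i = 0) :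
    ∑ x, α j x * P (j - 1) x ≤
      s * ∑' I₀ : Ideal (𝓞 K), if Distinguishable I₀ ∧ N ≤ Ideal.absNorm I₀ ∧ IsPmin I₀ (p j)
        then 1 / (Ideal.absNorm I₀ : ℝ) else 0 := by
  have hJ : Icc 1 (j - 1) ⊆ Icc 1 J :=
    Icc_subset_Icc_right ((j.sub_le 1).trans (mem_Icc.mp hj).2)
  have huniform : P (j - 1) = P 0 :=
    eq_initial_of_forall_eq_distort_zero
      (fun i hi x => hα i (hJ hi) ▸ fiberDensity_nonneg _ _ x)
      fun i hi => hδ i hi ▸ hP i (hJ hi)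
  calc ∑ x, α j x * P (j - 1) x
      = (#(badSet a I Q (p j)) : ℝ) / Fintype.card (𝓞 K ⧸ Q) := by
        simp only [huniform, hP0]
        rw [← sum_mul, mul_one_div, hα j hj, sum_fiberDensity, hB j hj]
    _ ≤ ∑ i with IsPmin (I i) (p j), 1 / (Ideal.absNorm (I i) : ℝ) :=
        card_badSet_div_card_le a hQ (p j)
    _ = ∑ i with IsPmin (I i) (p j), if Distinguishable (I i) ∧ N ≤ Ideal.absNorm (I i) ∧
          IsPmin (I i) (p j) then 1 / (Ideal.absNorm (I i) : ℝ) else 0 :=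
        sum_congr rfl fun i hi => (if_pos ⟨hI i, hN i, (mem_filter_univ i).mp hi⟩).symm
    _ ≤ _ :=
        sum_comp_le_mul_tsum (fun I₀ => by positivity) (summable_inv_absNorm_of_isPmin (p j) N)
          fun I₀ => (card_le_card (filter_subset_filter _ (subset_univ _))).trans (hs I₀)

/-- First moment bound. -/
theorem first_moment_bound
    {K : Type*} [Field K] [NumberField K]
    (n : ℕ) (hn : 0 < n)
    (a : Fin n → 𝓞 K) (Idl : Fin n → Ideal (𝓞 K))
    (hdist : ∀ i : Fin n, Distinguishable (Idl i))
    (hmono : ∀ i j : Fin n, i ≤ j → Ideal.absNorm (Idl i) ≤ Ideal.absNorm (Idl j))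
    (s : ℕ)
    (hsle : ∀ I₀ : Ideal (𝓞 K), (Finset.univ.filter fun i : Fin n => Idl i = I₀).card ≤ s)
    (hseq : ∃ I₀ : Ideal (𝓞 K), (Finset.univ.filter fun i : Fin n => Idl i = I₀).card = s)
    (Q : Ideal (𝓞 K)) (hQ : Q = ⨅ i : Fin n, Idl i)
    (J : ℕ) (p : ℕ → Ideal (𝓞 K)) (ν : ℕ → ℕ)
    (hp : ∀ j ∈ Finset.Icc 1 J, (p j).IsPrime)
    (hν : ∀ j ∈ Finset.Icc 1 J, 1 ≤ ν j)
    (hpinj : ∀ j ∈ Finset.Icc 1 J, ∀ j' ∈ Finset.Icc 1 J, p j = p j' → j = j')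
    (hfact : Q = ∏ j ∈ Finset.Icc 1 J, p j ^ ν j)
    (hpmono : ∀ j ∈ Finset.Icc 1 J, ∀ j' ∈ Finset.Icc 1 J, j ≤ j' →
      Ideal.absNorm (p j) ≤ Ideal.absNorm (p j'))
    (Qp : ℕ → Ideal (𝓞 K)) (hQp : ∀ j : ℕ, Qp j = ∏ i ∈ Finset.Icc 1 j, p i ^ ν i)
    [Fintype (𝓞 K ⧸ Q)]
    (B : ℕ → Finset (𝓞 K ⧸ Q))
    (hB : ∀ j ∈ Finset.Icc 1 J, B j = Finset.univ.filter fun x : 𝓞 K ⧸ Q =>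
      ∃ i : Fin n, IsPmin (Idl i) (p j) ∧
        x - Ideal.Quotient.mk Q (a i) ∈ (Idl i).map (Ideal.Quotient.mk Q))
    (F : ℕ → (𝓞 K ⧸ Q) → Finset (𝓞 K ⧸ Q))
    (hF : ∀ (j : ℕ) (x : 𝓞 K ⧸ Q),
      F j x = Finset.univ.filter fun x' : 𝓞 K ⧸ Q => x' - x ∈ (Qp j).map (Ideal.Quotient.mk Q))
    (α : ℕ → (𝓞 K ⧸ Q) → ℝ)
    (hα : ∀ j ∈ Finset.Icc 1 J, ∀ x : 𝓞 K ⧸ Q,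
      α j x = ((F (j - 1) x ∩ B j).card : ℝ) / ((F (j - 1) x).card : ℝ))
    (δ : ℕ → ℝ) (hδ : ∀ j ∈ Finset.Icc 1 J, δ j ∈ Set.Icc (0 : ℝ) (1 / 2))
    (P : ℕ → (𝓞 K ⧸ Q) → ℝ)
    (hP0 : ∀ x : 𝓞 K ⧸ Q, P 0 x = 1 / (Fintype.card (𝓞 K ⧸ Q) : ℝ))
    (hPrec : ∀ j ∈ Finset.Icc 1 J, ∀ x : 𝓞 K ⧸ Q,
      P j x = if α j x < δ j then (if x ∈ B j then 0 else P (j - 1) x / (1 - α j x))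
        else if α j x = 0 then P (j - 1) x
        else P (j - 1) x * (α j x - (if x ∈ B j then δ j else 0)) / (α j x * (1 - δ j)))
    (j : ℕ) (hj : j ∈ Finset.Icc 1 J)
    (hδ0 : ∀ i ∈ Finset.Icc 1 (j - 1), δ i = 0) :
    ∑ x : 𝓞 K ⧸ Q, α j x * P (j - 1) x ≤
      (s : ℝ) * ∑' I : Ideal (𝓞 K),
        (if Distinguishable I ∧ Ideal.absNorm (Idl ⟨0, hn⟩) ≤ Ideal.absNorm I ∧
            IsPmin I (p j)
         then 1 / (Ideal.absNorm I : ℝ) else 0) :=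
  first_moment_bound_general a hdist (fun i => hmono ⟨0, hn⟩ i (Nat.zero_le i)) hsle
    (fun i => hQ ▸ iInf_le Idl i) p (fun i => Ideal.Quotient.mk ((Qp i).map (Ideal.Quotient.mk Q)))
    (fun i hi => by ext; simp only [hB i hi, badSet, mem_filter_univ])
    (fun i hi => funext fun x => by simp only [hα i hi, hF, fiberDensity, Ideal.Quotient.eq])
    hP0 (fun i hi => funext (hPrec i hi)) hj hδ0
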